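/- Let M be an 8×8 complex matrix (indexed by ((Fin 2) × (Fin 2)) × (Fin 2) via iterated Kronecker products). Suppose M is Hermitian, M anticommutes with both kinetic matrices Γ₁ = σx ⊗ σ0 ⊗ σz and Γ₂ = σz ⊗ σz ⊗ σz, M commutes with both symmetry matrices S₁ = σ0 ⊗ σz ⊗ σ0 and S₂ = σx ⊗ σx ⊗ σ0, and M satisfies the time-reversal invariance condition (σ0 ⊗ σ0 ⊗ σy) * M̄ * (σ0 ⊗ σ0 ⊗ σy) = M, where M̄ denotes the entrywise complex conjugate of M. Then there exists a real number m such that M = m • (σy ⊗ σz ⊗ σz). Conversely, every real multiple of σy ⊗ σz ⊗ σz satisfies all of these conditions. (This is the statement that the symmetric mass term of the π-flux Majorana Dirac Hamiltonian in symmetry class DIII is unique up to a real scalar.) -/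

import Mathlib

open Matrix Complex

/-- The 2×2 identity Pauli matrix σ0. -/
noncomputable def σ0 : Matrix (Fin 2) (Fin 2) ℂ := !![1, 0; 0, 1]
/-- The Pauli matrix σx. -/
noncomputable def σx : Matrix (Fin 2) (Fin 2) ℂ := !![0, 1; 1, 0]
/-- The Pauli matrix σy. -/
noncomputable def σy : Matrix (Fin 2) (Fin 2) ℂ := !![0, -I; I, 0]
/-- The Pauli matrix σz. -/
noncomputable def σz : Matrix (Fin 2) (Fin 2) ℂ := !![1, 0; 0, -1]

/-- Kronecker product of two 2×2 complex matrices. -/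
noncomputable def kron (A B : Matrix (Fin 2) (Fin 2) ℂ) :
    Matrix (Fin 2 × Fin 2) (Fin 2 × Fin 2) ℂ :=
  Matrix.kroneckerMap (· * ·) A B

/-- Iterated Kronecker product of three 2×2 complex matrices, an 8×8 matrix. -/
noncomputable def kron3 (A B C : Matrix (Fin 2) (Fin 2) ℂ) :
    Matrix ((Fin 2 × Fin 2) × Fin 2) ((Fin 2 × Fin 2) × Fin 2) ℂ :=
  Matrix.kroneckerMap (· * ·) (kron A B) C

/-!
The 64 Pauli strings `A ⊗ B ⊗ C` form an orthogonal basis of the 8×8 matrices for the trace form,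
and every symmetry in the theorem is diagonal in it: two Pauli strings commute or anticommute, and
transposition sends a Pauli string to itself up to a sign. So each symmetry is a selection rule,
which forces the coefficient `tr (P M) / 8` to vanish unless the Pauli string `P` transforms under
it with the same sign as `M`. Only `σy ⊗ σz ⊗ σz` passes all of them, and its coefficient is real
since `M` is Hermitian. For Hermitian `M` the conjugate is the transpose, so that time reversal
too becomes a linear condition.
-/

section SelectionRules

variable {n R : Type*} [Fintype n] [DecidableEq n] [CommRing R] [IsAddTorsionFree R]

theorem trace_mul_eq_zero_of_sign_ne {P Q M : Matrix n n R} {ε δ : ℤˣ}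
    (hQ : Q * Q = 1) (hP : P * Q = ε • (Q * P)) (hM : M * Q = δ • (Q * M)) (h : ε ≠ δ) :
    (P * M).trace = 0 := by
  obtain rfl : ε = -δ := Int.units_ne_iff_eq_neg.mp h
  have hPMQ : P * M * Q = -(Q * (P * M)) := by
    rw [mul_assoc, hM, mul_smul_comm, ← mul_assoc, hP, smul_mul_assoc, smul_smul, mul_neg,
      Int.units_mul_self, Units.neg_smul, one_smul, mul_assoc]
  refine self_eq_neg.mp ?_
  calc (P * M).trace = (P * M * Q * Q).trace := by rw [mul_assoc (P * M), hQ, mul_one]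
    _ = -(Q * (P * M) * Q).trace := by rw [hPMQ, neg_mul, trace_neg]
    _ = -(P * M).trace := by rw [trace_mul_cycle, hQ, one_mul]

theorem trace_mul_eq_zero_of_transpose_sign_ne {P U M : Matrix n n R} {ε η : ℤˣ}
    (hU : U * U = 1) (hP : P * U = ε • (U * P)) (hPt : Pᵀ = η • P)
    (hM : U * Mᵀ * U = M) (h : ε * η ≠ 1) : (P * M).trace = 0 := by
  have hεη : ε * η = -1 := (Int.units_eq_one_or _).resolve_left h
  refine self_eq_neg.mp ?_
  calc (P * M).trace = (P * U * Mᵀ * U).trace := by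
        rw [mul_assoc P, mul_assoc P, hM]
    _ = ε • (U * (P * Mᵀ) * U).trace := by
        rw [hP, smul_mul_assoc, smul_mul_assoc, trace_smul, mul_assoc U P]
    _ = ε • (P * Mᵀ).trace := by rw [trace_mul_cycle, hU, one_mul]
    _ = ε • (M * Pᵀ).trace := by rw [← trace_transpose, transpose_mul, transpose_transpose]
    _ = -(P * M).trace := by
        rw [hPt, mul_smul_comm, trace_smul, smul_smul, hεη, Units.neg_smul, one_smul,
          trace_mul_comm]

end SelectionRules

theorem eq_sum_trace_mul_smul {n ι K : Type*} [Fintype n] [Field K] [Fintype ι] [DecidableEq ι]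
    {e : ι → Matrix n n K} {c : K} (hc : c ≠ 0)
    (he : ∀ i j, (e i * e j).trace = if i = j then c else 0)
    (hcard : Fintype.card ι = Fintype.card n * Fintype.card n) (M : Matrix n n K) :
    M = ∑ i, ((e i * M).trace / c) • e i := by
  have trace_mul_sum (g : ι → K) (i : ι) : (e i * ∑ j, g j • e j).trace = g i * c := by
    simp [Finset.mul_sum, trace_sum, he]
  have hli : LinearIndependent K e := Fintype.linearIndependent_iff.mpr fun g hg i => by
    simpa [hg, hc] using (trace_mul_sum g i).symm
  have hspan : Submodule.span K (Set.range e) = ⊤ :=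
    hli.span_eq_top_of_card_eq_finrank' (by simp [hcard, Module.finrank_matrix])
  obtain ⟨g, rfl⟩ := (Submodule.mem_span_range_iff_exists_fun K).mp
    (hspan ▸ Submodule.mem_top : M ∈ Submodule.span K (Set.range e))
  simp only [trace_mul_sum, mul_div_cancel_right₀ _ hc]

section Hermitian

variable {n R : Type*} [CommSemiring R] [StarRing R] {A B : Matrix n n R}

theorem map_starRingEnd_eq_transpose_of_isHermitian (hA : A.IsHermitian) :
    A.map (starRingEnd R) = Aᵀ := by
  ext i j
  exact hA.apply j i

theorem isSelfAdjoint_trace_mul_of_isHermitian [Fintype n] (hA : A.IsHermitian)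
    (hB : B.IsHermitian) : IsSelfAdjoint (A * B).trace := by
  rw [IsSelfAdjoint, ← trace_conjTranspose, conjTranspose_mul, hA.eq, hB.eq, trace_mul_comm]

end Hermitian

section Kron3

variable (A B C A' B' C' : Matrix (Fin 2) (Fin 2) ℂ)

theorem kron3_mul_kron3 :
    kron3 A B C * kron3 A' B' C' = kron3 (A * A') (B * B') (C * C') := by
  simp only [kron3, kron, mul_kronecker_mul]

theorem kron3_one : kron3 1 1 1 = 1 := by
  simp only [kron3, kron, one_kronecker_one]

theorem transpose_kron3 : (kron3 A B C)ᵀ = kron3 Aᵀ Bᵀ Cᵀ := by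
  simp only [kron3, kron, kroneckerMap_transpose]

theorem conjTranspose_kron3 : (kron3 A B C)ᴴ = kron3 Aᴴ Bᴴ Cᴴ := by
  simp only [kron3, kron, conjTranspose_kronecker]

theorem trace_kron3 : (kron3 A B C).trace = A.trace * B.trace * C.trace := by
  simp only [kron3, kron, trace_kronecker]

theorem kron3_units_smul (ε₁ ε₂ ε₃ : ℤˣ) :
    kron3 (ε₁ • A) (ε₂ • B) (ε₃ • C) = (ε₁ * ε₂ * ε₃) • kron3 A B C := by
  simp only [kron3, kron, smul_kronecker, kronecker_smul, smul_smul]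
  congr 1
  ac_rfl

end Kron3

/-- The labels of the Pauli matrices, with `one` for `σ0`. -/
inductive PauliIndex
  | one | x | y | z
  deriving DecidableEq

namespace PauliIndex

instance : Fintype PauliIndex := ⟨{one, x, y, z}, fun a => by cases a <;> decide⟩

/-- The Pauli matrix with a given label. -/
noncomputable def toMatrix : PauliIndex → Matrix (Fin 2) (Fin 2) ℂ
  | one => σ0
  | x => σx
  | y => σy
  | z => σz

/-- The sign `ε` in the relation `A * B = ε • (B * A)` between two Pauli matrices, valued in
`ℤˣ` to make the selection rules decidable. -/
def commSign (a b : PauliIndex) : ℤˣ :=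
  if a = one ∨ b = one ∨ a = b then 1 else -1

/-- The sign `η` in the relation `Aᵀ = η • A` for a Pauli matrix. -/
def transposeSign (a : PauliIndex) : ℤˣ :=
  if a = y then -1 else 1

theorem toMatrix_mul_self (a : PauliIndex) : a.toMatrix * a.toMatrix = 1 := by
  cases a <;> simp [toMatrix, σ0, σx, σy, σz, one_fin_two]

theorem toMatrix_mul_comm (a b : PauliIndex) :
    a.toMatrix * b.toMatrix = a.commSign b • (b.toMatrix * a.toMatrix) := by
  cases a <;> cases b <;> simp [toMatrix, commSign, σ0, σx, σy, σz]

theorem transpose_toMatrix (a : PauliIndex) : a.toMatrixᵀ = a.transposeSign • a.toMatrix := by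
  cases a <;> simp [toMatrix, transposeSign, σ0, σx, σy, σz, ← Matrix.ext_iff, Fin.forall_fin_two]

theorem isHermitian_toMatrix (a : PauliIndex) : a.toMatrix.IsHermitian := by
  cases a <;> simp [toMatrix, IsHermitian, σ0, σx, σy, σz, ← Matrix.ext_iff, Fin.forall_fin_two]

theorem trace_toMatrix_mul_toMatrix (a b : PauliIndex) :
    (a.toMatrix * b.toMatrix).trace = if a = b then 2 else 0 := by
  cases a <;> cases b <;> simp [toMatrix, σ0, σx, σy, σz, trace_fin_two, one_add_one_eq_two]

end PauliIndex

/-- The labels of the 64 Pauli strings `A ⊗ B ⊗ C`, where `A`, `B`, `C` are Pauli matrices;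
they index the basis in which `M` is expanded. -/
abbrev PauliString : Type := PauliIndex × PauliIndex × PauliIndex

namespace PauliString

variable {M : Matrix ((Fin 2 × Fin 2) × Fin 2) ((Fin 2 × Fin 2) × Fin 2) ℂ}

/-- The 8×8 matrix `A ⊗ B ⊗ C` of a Pauli string. -/
noncomputable def toMatrix (P : PauliString) :
    Matrix ((Fin 2 × Fin 2) × Fin 2) ((Fin 2 × Fin 2) × Fin 2) ℂ :=
  kron3 P.1.toMatrix P.2.1.toMatrix P.2.2.toMatrix

/-- The sign `ε` in the relation `P * Q = ε • (Q * P)` between two Pauli strings. -/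
def commSign (P Q : PauliString) : ℤˣ :=
  P.1.commSign Q.1 * P.2.1.commSign Q.2.1 * P.2.2.commSign Q.2.2

/-- The sign `η` in the relation `Pᵀ = η • P` for a Pauli string. -/
def transposeSign (P : PauliString) : ℤˣ :=
  P.1.transposeSign * P.2.1.transposeSign * P.2.2.transposeSign

theorem toMatrix_mul_self (P : PauliString) : P.toMatrix * P.toMatrix = 1 := by
  simp only [toMatrix, kron3_mul_kron3, PauliIndex.toMatrix_mul_self, kron3_one]

theorem toMatrix_mul_comm (P Q : PauliString) :
    P.toMatrix * Q.toMatrix = P.commSign Q • (Q.toMatrix * P.toMatrix) := by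
  simp only [toMatrix, commSign, kron3_mul_kron3, ← kron3_units_smul,
    ← PauliIndex.toMatrix_mul_comm]

theorem transpose_toMatrix (P : PauliString) : P.toMatrixᵀ = P.transposeSign • P.toMatrix := by
  simp only [toMatrix, transposeSign, transpose_kron3, ← kron3_units_smul,
    ← PauliIndex.transpose_toMatrix]

theorem isHermitian_toMatrix (P : PauliString) : P.toMatrix.IsHermitian := by
  simp only [IsHermitian, toMatrix, conjTranspose_kron3, (PauliIndex.isHermitian_toMatrix _).eq]

theorem trace_toMatrix_mul_toMatrix (P Q : PauliString) :
    (P.toMatrix * Q.toMatrix).trace = if P = Q then 8 else 0 := by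
  obtain ⟨a, b, c⟩ := P
  obtain ⟨a', b', c'⟩ := Q
  simp only [toMatrix, kron3_mul_kron3, trace_kron3, PauliIndex.trace_toMatrix_mul_toMatrix,
    Prod.mk.injEq, ite_and]
  split_ifs <;> norm_num

theorem trace_mul_eq_zero_of_commutes (P Q : PauliString)
    (hM : M * Q.toMatrix = Q.toMatrix * M) (h : P.commSign Q ≠ 1) : (P.toMatrix * M).trace = 0 :=
  trace_mul_eq_zero_of_sign_ne Q.toMatrix_mul_self (P.toMatrix_mul_comm Q)
    (by rw [hM, one_smul]) h

theorem trace_mul_eq_zero_of_anticommutes (P Q : PauliString)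
    (hM : M * Q.toMatrix = -(Q.toMatrix * M)) (h : P.commSign Q ≠ -1) :
    (P.toMatrix * M).trace = 0 :=
  trace_mul_eq_zero_of_sign_ne Q.toMatrix_mul_self (P.toMatrix_mul_comm Q)
    (by rw [hM, Units.neg_smul, one_smul]) h

theorem trace_mul_eq_zero_of_timeReversal (P U : PauliString) (hMh : M.IsHermitian)
    (hM : U.toMatrix * M.map (starRingEnd ℂ) * U.toMatrix = M)
    (h : P.commSign U * P.transposeSign ≠ 1) : (P.toMatrix * M).trace = 0 :=
  trace_mul_eq_zero_of_transpose_sign_ne U.toMatrix_mul_self (P.toMatrix_mul_comm U)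
    P.transpose_toMatrix (map_starRingEnd_eq_transpose_of_isHermitian hMh ▸ hM) h

theorem isHermitian_ofReal_smul_toMatrix (P : PauliString) (m : ℝ) :
    ((m : ℂ) • P.toMatrix).IsHermitian := by
  rw [IsHermitian, conjTranspose_smul, P.isHermitian_toMatrix.eq, RCLike.star_def, conj_ofReal]

theorem smul_toMatrix_mul_comm (P Q : PauliString) (m : ℂ) :
    (m • P.toMatrix) * Q.toMatrix = P.commSign Q • (Q.toMatrix * m • P.toMatrix) := by
  rw [smul_mul_assoc, toMatrix_mul_comm, mul_smul_comm, smul_comm]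

theorem smul_toMatrix_commutes (P Q : PauliString) (m : ℂ) (h : P.commSign Q = 1) :
    (m • P.toMatrix) * Q.toMatrix = Q.toMatrix * m • P.toMatrix := by
  rw [smul_toMatrix_mul_comm, h, one_smul]

theorem smul_toMatrix_anticommutes (P Q : PauliString) (m : ℂ) (h : P.commSign Q = -1) :
    (m • P.toMatrix) * Q.toMatrix = -(Q.toMatrix * m • P.toMatrix) := by
  rw [smul_toMatrix_mul_comm, h, Units.neg_smul, one_smul]

theorem ofReal_smul_toMatrix_timeReversal (P U : PauliString) (m : ℝ)
    (h : P.commSign U * P.transposeSign = 1) :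
    U.toMatrix * ((m : ℂ) • P.toMatrix).map (starRingEnd ℂ) * U.toMatrix =
      (m : ℂ) • P.toMatrix := by
  calc U.toMatrix * ((m : ℂ) • P.toMatrix).map (starRingEnd ℂ) * U.toMatrix
      = P.transposeSign • (U.toMatrix * ((m : ℂ) • P.toMatrix * U.toMatrix)) := by
        rw [map_starRingEnd_eq_transpose_of_isHermitian (isHermitian_ofReal_smul_toMatrix P m),
          transpose_smul, transpose_toMatrix, smul_comm, mul_smul_comm, smul_mul_assoc, mul_assoc]
    _ = (P.commSign U * P.transposeSign) • (m : ℂ) • P.toMatrix := by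
        rw [smul_toMatrix_mul_comm, mul_smul_comm, ← mul_assoc, toMatrix_mul_self, one_mul,
          smul_smul, mul_comm]
    _ = (m : ℂ) • P.toMatrix := by rw [h, one_smul]

theorem exists_eq_ofReal_smul_toMatrix (Q : PauliString) (hM : M.IsHermitian)
    (h : ∀ P ≠ Q, (P.toMatrix * M).trace = 0) : ∃ m : ℝ, M = (m : ℂ) • Q.toMatrix := by
  have hsum := eq_sum_trace_mul_smul (by norm_num) trace_toMatrix_mul_toMatrix (by decide) M
  rw [Finset.sum_eq_single Q (fun P _ hP => by simp [h P hP]) (by simp)] at hsum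
  have hre : ((Q.toMatrix * M).trace.re : ℂ) = (Q.toMatrix * M).trace :=
    conj_eq_iff_re.mp (isSelfAdjoint_trace_mul_of_isHermitian Q.isHermitian_toMatrix hM)
  refine ⟨(Q.toMatrix * M).trace.re / 8, hsum.trans ?_⟩
  rw [ofReal_div, hre, ofReal_ofNat]

/-- The commutation rules alone leave the four strings `σy ⊗ σz ⊗ σz`, `σy ⊗ σz ⊗ σ0`,
`σ0 ⊗ σ0 ⊗ σx` and `σ0 ⊗ σ0 ⊗ σy`; the last three are odd under time reversal. -/
theorem sign_ne_of_ne_yzz : ∀ P : PauliString, P ≠ (.y, .z, .z) →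
    P.commSign (.x, .one, .z) ≠ -1 ∨ P.commSign (.z, .z, .z) ≠ -1 ∨
      P.commSign (.one, .z, .one) ≠ 1 ∨ P.commSign (.x, .x, .one) ≠ 1 ∨
      P.commSign (.one, .one, .y) * P.transposeSign ≠ 1 := by
  decide

end PauliString

/-- The symmetric mass term of the π-flux Majorana Dirac Hamiltonian in symmetry
class DIII is unique up to a real scalar: a Hermitian 8×8 matrix `M` that
anticommutes with the kinetic matrices σx⊗σ0⊗σz and σz⊗σz⊗σz, commutes with the
magnetic translation matrices σ0⊗σz⊗σ0 and σx⊗σx⊗σ0, and is time-reversal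
invariant, (σ0⊗σ0⊗σy)·M̄·(σ0⊗σ0⊗σy) = M, is exactly a real multiple of σy⊗σz⊗σz. -/
theorem class_DIII_mass_term_unique
    (M : Matrix ((Fin 2 × Fin 2) × Fin 2) ((Fin 2 × Fin 2) × Fin 2) ℂ) :
    (M.IsHermitian ∧
      M * kron3 σx σ0 σz = -(kron3 σx σ0 σz * M) ∧
      M * kron3 σz σz σz = -(kron3 σz σz σz * M) ∧
      M * kron3 σ0 σz σ0 = kron3 σ0 σz σ0 * M ∧
      M * kron3 σx σx σ0 = kron3 σx σx σ0 * M ∧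
      kron3 σ0 σ0 σy * M.map (starRingEnd ℂ) * kron3 σ0 σ0 σy = M) ↔
    ∃ m : ℝ, M = (m : ℂ) • kron3 σy σz σz := by
  constructor
  · rintro ⟨hM, hΓ₁, hΓ₂, hS₁, hS₂, hT⟩
    refine PauliString.exists_eq_ofReal_smul_toMatrix (.y, .z, .z) hM fun P hP => ?_
    rcases P.sign_ne_of_ne_yzz hP with h | h | h | h | h
    · exact P.trace_mul_eq_zero_of_anticommutes (.x, .one, .z) hΓ₁ h
    · exact P.trace_mul_eq_zero_of_anticommutes (.z, .z, .z) hΓ₂ h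
    · exact P.trace_mul_eq_zero_of_commutes (.one, .z, .one) hS₁ h
    · exact P.trace_mul_eq_zero_of_commutes (.x, .x, .one) hS₂ h
    · exact P.trace_mul_eq_zero_of_timeReversal (.one, .one, .y) hM hT h
  · rintro ⟨m, rfl⟩
    let P : PauliString := (.y, .z, .z)
    exact ⟨P.isHermitian_ofReal_smul_toMatrix m,
      P.smul_toMatrix_anticommutes (.x, .one, .z) m (by decide),
      P.smul_toMatrix_anticommutes (.z, .z, .z) m (by decide),
      P.smul_toMatrix_commutes (.one, .z, .one) m (by decide),
      P.smul_toMatrix_commutes (.x, .x, .one) m (by decide),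
      P.ofReal_smul_toMatrix_timeReversal (.one, .one, .y) m (by decide)⟩
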